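/- Let k ≥ 2 and let S_2≀S_k ≤ S_{2k} be the subgroup of permutations mapping each pair {2i−1,2i} (1 ≤ i ≤ k) to some pair {2j−1,2j}; each g ∈ S_2≀S_k induces a permutation ḡ of the set of k pairs. Let Δ_k = {g ∈ S_2≀S_k : sgn(g) = sgn(ḡ)}. Then the permutation character of S_{2k} on the cosets of Δ_k is multiplicity-free if and only if there is NO strictly decreasing sequence of positive integers b_1 > b_2 > … > b_s ≥ 1 (with s ≥ 1) such that k = 4(b_1 + … + b_s) − s. -/

import Mathlib

/-- The permutation character of `G` on the cosets of `H` is multiplicity-free: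
every irreducible complex representation of `G` has at most a one-dimensional
subspace of `H`-fixed vectors. -/
noncomputable def IsMultFree {G : Type} [Group G] (H : Subgroup G) : Prop :=
  ∀ V : FDRep ℂ G, CategoryTheory.Simple V →
    Module.finrank ℂ (Representation.invariants (V.ρ.comp H.subtype)) ≤ 1

/-- `σ` is the permutation of the `k` pairs `{2i−1, 2i}` of `{1,…,2k}` induced by the
permutation `g` (so `g` maps each pair onto a pair, pair `j` going to pair `σ j`). -/
def InducedPairPerm {k : ℕ} (g : Equiv.Perm (Fin (2 * k))) (σ : Equiv.Perm (Fin k)) : Prop :=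
  ∀ i : Fin (2 * k), ((g i : ℕ) / 2) = (σ ⟨(i : ℕ) / 2, by have := i.isLt; omega⟩ : ℕ)

section RepPart
open CategoryTheory

theorem simple_inv {G : Type} [Group G] (V : FDRep ℂ G) [Simple V] (W : Submodule ℂ V)
    (hW : ∀ g, ∀ v ∈ W, V.ρ g v ∈ W) : W = ⊥ ∨ W = ⊤ := by
  let S : Subrepresentation V.ρ := ⟨W, fun g v hv => hW g v hv⟩
  let f : FDRep.of S.toRepresentation ⟶ V :=
    ⟨InducedCategory.homMk (ModuleCat.ofHom W.subtype), fun g => by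
      ext1
      rfl⟩
  have hf : ∀ w : W, f.hom.hom.hom w = (w : V) := fun w => rfl
  have : Mono f := by
    refine ⟨fun {Z} a b hab => ?_⟩
    ext x
    exact congrArg (fun t : Z ⟶ V => t.hom.hom.hom x) hab
  by_cases h0 : f = 0
  · left
    rw [Submodule.eq_bot_iff]
    intro x hx
    have := hf ⟨x, hx⟩
    rw [h0] at this
    exact this.symm
  · right
    have : IsIso f := isIso_of_mono_of_nonzero h0
    rw [Submodule.eq_top_iff']
    intro x
    have h2 : (inv f ≫ f).hom.hom.hom x = x := by
      rw [IsIso.inv_hom_id]; rfl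
    rw [← h2]
    exact ((inv f).hom.hom.hom x : W).2

theorem simple_of_irr {G V : Type} [Group G] [Finite G] [AddCommGroup V] [Module ℂ V]
    [FiniteDimensional ℂ V] (ρ : Representation ℂ G V) [ρ.IsIrreducible] :
    Simple (FDRep.of ρ) := by
  have : NeZero (Nat.card G : ℂ) := ⟨by exact_mod_cast Nat.card_pos.ne'⟩
  rw [FDRep.simple_iff_end_is_rank_one]
  rw [← (Representation.linHom.invariantsEquivFDRepHom (FDRep.of ρ) (FDRep.of ρ)).finrank_eq]
  rw [← Representation.IsIrreducible.finrank_intertwiningMap_self ρ]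
  exact (Representation.invariantsEquivIntertwiningMap ρ ρ).finrank_eq


theorem irr_of_inv {G V : Type} [Group G] [AddCommGroup V] [Module ℂ V] [Nontrivial V]
    (ρ : Representation ℂ G V)
    (h : ∀ W : Submodule ℂ V, (∀ g, ∀ v ∈ W, ρ g v ∈ W) → W = ⊥ ∨ W = ⊤) :
    ρ.IsIrreducible := by
  have hnt : Nontrivial (Subrepresentation ρ) := by
    refine ⟨⟨⊥, ⊤, fun hbt => ?_⟩⟩
    have := congrArg Subrepresentation.toSubmodule hbt
    exact bot_ne_top (α := Submodule ℂ V) this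
  refine ⟨fun S => ?_⟩
  rcases h S.toSubmodule (fun g v hv => S.apply_mem_toSubmodule g hv) with h1 | h1
  · left; exact Subrepresentation.toSubmodule_injective h1
  · right; exact Subrepresentation.toSubmodule_injective h1

theorem multFree_of_symm {G : Type} [Group G] [Finite G] (K : Subgroup G)
    (hK : ∀ g : G, ∃ δ ∈ K, ∃ δ' ∈ K, g⁻¹ = δ * g * δ') : IsMultFree K := by
  intro V hV
  have : Fintype K := Fintype.ofFinite K
  have : Invertible (Fintype.card K : ℂ) :=
    invertibleOfNonzero (by exact_mod_cast Fintype.card_ne_zero)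
  set ρ : Representation ℂ G V := V.ρ with hρ
  set U := Representation.invariants (ρ.comp K.subtype) with hU
  set P := Representation.averageMap (ρ.comp K.subtype) with hP
  have hPU : ∀ v, P v ∈ U := Representation.averageMap_invariant _
  have hPid : ∀ v ∈ U, P v = v := Representation.averageMap_id _
  have hPdef : ∀ v, P v = ⅟(Fintype.card K : ℂ) • ∑ δ : K, ρ δ v := by
    intro v
    simp [hP, Representation.averageMap, GroupAlgebra.average]
  have hinv : ∀ u ∈ U, ∀ δ ∈ K, ρ δ u = u := fun u hu δ hδ => hu ⟨δ, hδ⟩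
  have hPinv : ∀ v, ∀ δ ∈ K, P (ρ δ v) = P v := by
    intro v δ hδ
    rw [hPdef, hPdef]
    congr 1
    refine Fintype.sum_equiv (Equiv.mulRight ⟨δ, hδ⟩) _ _ (fun x => ?_)
    simp [map_mul]
  let T : G → V → V := fun g v => P (ρ g v)
  have hT1 : ∀ g, ∀ u ∈ U, ∀ δ ∈ K, ∀ δ' ∈ K, T (δ * g * δ') u = T g u := by
    intro g u hu δ hδ δ' hδ'
    simp only [T, map_mul, Module.End.mul_apply]
    rw [hinv u hu _ hδ', hPinv _ _ hδ]
  have hT2 : ∀ g, ∀ u ∈ U, T g⁻¹ u = T g u := by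
    intro g u hu
    obtain ⟨δ, hδ, δ', hδ', h⟩ := hK g
    rw [h, hT1 g u hu δ hδ δ' hδ']
  have hT3 : ∀ g h, ∀ u, T g (T h u) =
      ⅟(Fintype.card K : ℂ) • ∑ δ : K, T (g * δ * h) u := by
    intro g h u
    simp only [T]
    rw [hPdef (ρ h u)]
    simp [map_smul, map_sum, map_mul]
  have hcomm : ∀ g h, ∀ u ∈ U, T g (T h u) = T h (T g u) := by
    intro g h u hu
    have h1 : T h (T g u) = T h⁻¹ (T g⁻¹ u) := by
      rw [hT2 g u hu, hT2 h _ (hPU _)]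
    rw [h1, hT3, hT3]
    congr 1
    refine Fintype.sum_equiv (Equiv.inv K) _ _ (fun x => ?_)
    rw [← hT2 _ u hu]
    simp [mul_assoc]
  have hspan : ∀ w ∈ U, w ≠ 0 → ∀ u ∈ U, u ∈ Submodule.span ℂ (Set.range fun h => T h w) := by
    intro w hw hw0 u hu
    have htop : Submodule.span ℂ (Set.range fun h => ρ h w) = ⊤ := by
      refine (simple_inv V (Submodule.span ℂ (Set.range fun h => ρ h w)) ?_).resolve_left ?_
      · intro g v hv
        have : Submodule.span ℂ (Set.range fun h => ρ h w) ≤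
            (Submodule.span ℂ (Set.range fun h => ρ h w)).comap (ρ g) := by
          rw [Submodule.span_le]
          rintro _ ⟨h, rfl⟩
          exact Submodule.subset_span ⟨g * h, by simp⟩
        exact this hv
      · intro hbot
        apply hw0
        have : w ∈ Submodule.span ℂ (Set.range fun h => ρ h w) :=
          Submodule.subset_span ⟨1, by simp⟩
        rw [hbot] at this
        simpa using this
    have h1 : P u ∈ (Submodule.span ℂ (Set.range fun h => ρ h w)).map P :=
      Submodule.mem_map_of_mem (by rw [htop]; trivial)
    rw [hPid u hu, Submodule.map_span, ← Set.range_comp] at h1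
    exact h1
  have hscal : ∀ g, ∃ c : ℂ, ∀ u ∈ U, T g u = c • u := by
    intro g
    by_cases hU0 : ∀ u ∈ U, u = 0
    · exact ⟨0, fun u hu => by rw [hU0 u hu]; simp [T]⟩
    push Not at hU0
    obtain ⟨u0, hu0, hu00⟩ := hU0
    let Tg : U →ₗ[ℂ] U := ((P ∘ₗ ρ g).comp U.subtype).codRestrict U (fun v => hPU _)
    have : Nontrivial U := ⟨⟨⟨u0, hu0⟩, 0, fun h => hu00 (by simpa using congrArg Subtype.val h)⟩⟩
    obtain ⟨c, hc⟩ := Module.End.exists_eigenvalue Tg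
    obtain ⟨w, hw⟩ := hc.exists_hasEigenvector
    have hw1 : T g w = c • (w : V) := congrArg Subtype.val hw.apply_eq_smul
    have hw0 : (w : V) ≠ 0 := by simpa using hw.2
    refine ⟨c, fun u hu => ?_⟩
    have h1 : Submodule.span ℂ (Set.range fun h => T h (w : V)) ≤
        LinearMap.eqLocus (P ∘ₗ ρ g) (c • LinearMap.id) := by
      rw [Submodule.span_le]
      rintro _ ⟨h, rfl⟩
      change T g (T h w) = c • T h w
      rw [hcomm g h w w.2, hw1]
      simp [T]
    exact h1 (hspan w w.2 hw0 u hu)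
  by_cases hU0 : ∀ u ∈ U, u = 0
  · refine finrank_le_one 0 ?_
    intro w
    exact ⟨0, by ext; simp [hU0 w w.2]⟩
  push Not at hU0
  obtain ⟨u0, hu0, hu00⟩ := hU0
  refine finrank_le_one (⟨u0, hu0⟩ : U) ?_
  intro w
  have h1 : Submodule.span ℂ (Set.range fun h => T h u0) ≤ Submodule.span ℂ {u0} := by
    rw [Submodule.span_le]
    rintro _ ⟨h, rfl⟩
    obtain ⟨c, hc⟩ := hscal h
    change T h u0 ∈ _
    rw [hc u0 hu0]
    exact Submodule.smul_mem _ _ (Submodule.mem_span_singleton_self _)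
  obtain ⟨c, hc⟩ := Submodule.mem_span_singleton.mp (h1 (hspan u0 hu0 hu00 w w.2))
  exact ⟨c, Subtype.ext hc⟩

theorem exists_gen_of_finrank {V : Type} [AddCommGroup V] [Module ℂ V] [Module.Finite ℂ V]
    (U : Submodule ℂ V) (h : Module.finrank ℂ U ≤ 1) : ∃ v : U, ∀ w : U, ∃ c : ℂ, c • v = w :=
  finrank_le_one_iff.1 h

open scoped MonoidAlgebra in
theorem comm_of_multFree {G : Type} [Group G] [Finite G] (K : Subgroup G) (hK : IsMultFree K)
    (c : G) (hc : ∀ δ, δ ∈ K ↔ c * δ * c⁻¹ ∈ K) (g : G) :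
    ∃ δ ∈ K, ∃ δ' ∈ K, c * g = δ * (g * c) * δ' := by
  classical
  have : Fintype K := Fintype.ofFinite K
  let o : G → ℂ[G] := fun g => MonoidAlgebra.single g 1
  have ho : ∀ a b, o a * o b = o (a * b) := by
    intro a b; simp [o, MonoidAlgebra.single_mul_single]
  let s : ℂ[G] := ∑ δ : K, o δ
  have hos : ∀ δ ∈ K, o δ * s = s := by
    intro δ hδ
    simp only [s, Finset.mul_sum, ho]
    exact Fintype.sum_equiv (Equiv.mulLeft ⟨δ, hδ⟩) _ _ (fun x => by simp)
  have hss : s * s = (Fintype.card K : ℂ) • s := by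
    conv_lhs => enter [1]; simp only [s]
    rw [Finset.sum_mul, Finset.sum_congr rfl (fun (δ : K) _ => hos δ δ.2)]
    simp [Nat.cast_smul_eq_nsmul]
  have hcs : o c * s = s * o c := by
    simp only [s, Finset.mul_sum, Finset.sum_mul, ho]
    refine Fintype.sum_equiv
      { toFun := fun (δ : K) => (⟨c * δ * c⁻¹, (hc δ).1 δ.2⟩ : K)
        invFun := fun (δ : K) => ⟨c⁻¹ * δ * c, (hc _).2 (by simp [mul_assoc])⟩
        left_inv := fun δ => by ext; simp [mul_assoc]
        right_inv := fun δ => by ext; simp [mul_assoc] } _ _ (fun x => by simp)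
  have hcard : (Fintype.card K : ℂ) ≠ 0 := by exact_mod_cast Fintype.card_ne_zero
  set z : ℂ[G] := (s * o g * s) * (s * o c * s) - (s * o c * s) * (s * o g * s) with hz
  have hz0 : ∀ x : ℂ[G], z * x = 0 := by
    have hN : ∀ N : Submodule ℂ[G] ℂ[G], IsSimpleModule ℂ[G] N → ∀ x ∈ N, z * x = 0 := by
      intro N hNs x hx
      let ρ : Representation ℂ G N :=
        ((Algebra.lsmul ℂ ℂ N : ℂ[G] →ₐ[ℂ] Module.End ℂ N) : ℂ[G] →* Module.End ℂ N).comp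
          (MonoidAlgebra.of ℂ G)
      have hρ : ∀ g (n : N), ρ g n = o g • n := fun g n => rfl
      have hfin : Module.Finite ℂ N :=
        inferInstanceAs (Module.Finite ℂ (N.restrictScalars ℂ))
      have hirr : ρ.IsIrreducible := by
        have : Nontrivial N := IsSimpleModule.nontrivial ℂ[G] N
        refine irr_of_inv ρ (fun W hW => ?_)
        let W' : Submodule ℂ[G] N :=
          { W with
            smul_mem' := by
              intro r x hx
              change r • x ∈ W
              induction r using MonoidAlgebra.induction_on with
              | of g => exact hW g x hx
              | add a b ha hb => rw [add_smul]; exact W.add_mem ha hb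
              | smul r a ha => rw [smul_assoc]; exact W.smul_mem _ ha }
        have hW' : ∀ x, x ∈ W' ↔ x ∈ W := fun x => Iff.rfl
        rcases eq_bot_or_eq_top W' with h | h
        · left; ext x; rw [← hW', h]; simp
        · right; ext x; rw [← hW', h]; simp
      have hd := hK (FDRep.of ρ) (simple_of_irr ρ)
      change Module.finrank ℂ (Representation.invariants (ρ.comp K.subtype)) ≤ 1 at hd
      obtain ⟨⟨v, hv⟩, hvs⟩ := exists_gen_of_finrank _ hd
      have hU : ∀ n : N, ∃ t : ℂ, s • n = t • v := by
        intro n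
        have h1 : s • n ∈ Representation.invariants (ρ.comp K.subtype) := by
          intro δ
          change o δ • s • n = s • n
          rw [smul_smul, hos δ δ.2]
        obtain ⟨t, ht⟩ := hvs ⟨_, h1⟩
        exact ⟨t, (congrArg Subtype.val ht).symm⟩
      have hU2 : ∀ a : ℂ[G], ∃ t : ℂ, (s * a) • v = t • v := by
        intro a; rw [mul_smul]; exact hU _
      obtain ⟨tn, htn⟩ := hU ⟨x, hx⟩
      obtain ⟨tg, htg⟩ := hU2 (o g)
      obtain ⟨tc, htc⟩ := hU2 (o c)
      obtain ⟨t1, ht1⟩ := hU2 1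
      rw [mul_one] at ht1
      have hsm : ∀ (a : ℂ[G]) (t : ℂ) (w : N), a • t • w = t • a • w := fun a t w =>
        smul_comm _ _ _
      have hf : ∀ (a b : ℂ[G]) (ta tb : ℂ), (s * a) • v = ta • v → (s * b) • v = tb • v →
          ((s * a * s) * (s * b * s)) • (⟨x, hx⟩ : N) = (ta * tb * t1 * tn) • v := by
        intro a b ta tb hta htb
        rw [mul_smul (s * a * s), mul_smul (s * b), htn, hsm, htb, hsm, hsm, mul_smul (s * a),
          ht1, hsm, hta, smul_smul, smul_smul, smul_smul]
        congr 1
        ring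
      have h1 := congrArg Subtype.val (hf _ _ _ _ htg htc)
      have h2 := congrArg Subtype.val (hf _ _ _ _ htc htg)
      rw [mul_comm tc tg, ← h1] at h2
      rw [hz, sub_mul, sub_eq_zero]
      exact h2.symm
    intro x
    have hx : x ∈ sSup { m : Submodule ℂ[G] ℂ[G] | IsSimpleModule ℂ[G] m } := by
      rw [IsSemisimpleModule.sSup_simples_eq_top]; trivial
    rw [sSup_eq_iSup'] at hx
    refine Submodule.iSup_induction _ (motive := fun x => z * x = 0) hx ?_ (mul_zero _) ?_
    · rintro ⟨N, hNs⟩ y hy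
      exact hN N hNs y hy
    · intro a b ha hb
      rw [mul_add, ha, hb, add_zero]
  have hz1 : z = 0 := by simpa using hz0 1
  have hkey : s * o (g * c) * s = s * o (c * g) * s := by
    have e1 : (s * o g * s) * (s * o c * s) = ((Fintype.card K : ℂ) * (Fintype.card K : ℂ)) •
        (s * o (g * c) * s) := by
      calc (s * o g * s) * (s * o c * s) = s * o g * (s * s) * (o c * s) := by
            simp only [mul_assoc]
        _ = (Fintype.card K : ℂ) • (s * o g * (s * (o c * s))) := by rw [hss]; simp [mul_assoc]
        _ = (Fintype.card K : ℂ) • (s * o g * (o c * (s * s))) := by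
            rw [← mul_assoc s, ← hcs, mul_assoc (o c)]
        _ = _ := by rw [hss, ← ho]; simp [mul_assoc, smul_smul]
    have e2 : (s * o c * s) * (s * o g * s) = ((Fintype.card K : ℂ) * (Fintype.card K : ℂ)) •
        (s * o (c * g) * s) := by
      calc (s * o c * s) * (s * o g * s) = s * o c * (s * s) * (o g * s) := by
            simp only [mul_assoc]
        _ = (Fintype.card K : ℂ) • (s * (o c * s) * (o g * s)) := by rw [hss]; simp [mul_assoc]
        _ = (Fintype.card K : ℂ) • ((s * s) * (o c * o g * s)) := by
            rw [hcs]; simp only [mul_assoc]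
        _ = _ := by rw [hss, ← ho]; simp [mul_assoc, smul_smul]
    rw [hz, e1, e2, sub_eq_zero] at hz1
    exact smul_right_injective _ (mul_ne_zero hcard hcard) hz1
  by_contra hcon
  let D : G → Prop := fun y => ∃ δ ∈ K, ∃ δ' ∈ K, y = δ * (g * c) * δ'
  let φ : ℂ[G] →ₗ[ℂ] ℂ := (MonoidAlgebra.basis G ℂ).constr ℂ (fun y => if D y then (1 : ℂ) else 0)
  have hφo : ∀ y, φ (o y) = if D y then (1 : ℂ) else 0 := by
    intro y
    have : o y = MonoidAlgebra.basis G ℂ y := by simp [o]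
    rw [this]
    exact Module.Basis.constr_basis _ _ _ _
  have hφ : ∀ x, φ (s * o x * s) = ∑ δ : K, ∑ δ' : K, φ (o (δ * x * δ')) := by
    intro x
    simp only [s, Finset.sum_mul, Finset.mul_sum, ho, map_sum]
    exact Finset.sum_comm
  have h1 := congrArg φ hkey
  rw [hφ, hφ] at h1
  have hL : ∀ δ δ' : K, φ (o (δ * (g * c) * δ')) = 1 := by
    intro δ δ'
    rw [hφo, if_pos ⟨δ, δ.2, δ', δ'.2, rfl⟩]
  have hR : ∀ δ δ' : K, φ (o (δ * (c * g) * δ')) = 0 := by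
    intro δ δ'
    rw [hφo, if_neg]
    rintro ⟨a, ha, b, hb, hab⟩
    apply hcon
    refine ⟨(δ : G)⁻¹ * a, K.mul_mem (K.inv_mem δ.2) ha, b * (δ' : G)⁻¹,
      K.mul_mem hb (K.inv_mem δ'.2), ?_⟩
    have : c * g = (δ : G)⁻¹ * (δ * (c * g) * δ') * (δ' : G)⁻¹ := by group
    rw [this, hab]; group
  simp only [hL, hR] at h1
  simp at h1

end RepPart
section CombPart
open Equiv Equiv.Perm

theorem two_color {α : Type} [Finite α] (a b : Perm α) (ha : a * a = 1) (hb : b * b = 1)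
    (ha' : ∀ x, a x ≠ x) (hb' : ∀ x, b x ≠ x) :
    ∃ c : α → Bool, ∀ v, c (a v) = !c v ∧ c (b v) = !c v := by
  classical
  set t := a * b with ht
  have haa : ∀ x, a (a x) = x := fun x => by rw [← Perm.mul_apply, ha]; rfl
  have hbb : ∀ x, b (b x) = x := fun x => by rw [← Perm.mul_apply, hb]; rfl
  have hainv : a⁻¹ = a := inv_eq_of_mul_eq_one_left ha
  have hbinv : b⁻¹ = b := inv_eq_of_mul_eq_one_left hb
  have hat : ∀ n : ℤ, a * t ^ n = t ^ (-n) * a := by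
    intro n
    have h1 : a * t * a⁻¹ = t⁻¹ := by
      rw [ht, mul_inv_rev, hainv, hbinv, ← mul_assoc, ha, one_mul]
    have h2 : a * t ^ n * a⁻¹ = t ^ (-n) := by
      rw [← conj_zpow, h1, inv_zpow, zpow_neg]
    rw [← h2]; group
  have hbt : ∀ n : ℤ, b * t ^ n = t ^ (-n) * b := by
    intro n
    have h1 : b * t * b⁻¹ = t⁻¹ := by
      rw [ht, mul_inv_rev, hainv, hbinv, mul_assoc, mul_assoc, hb, mul_one]
    have h2 : b * t ^ n * b⁻¹ = t ^ (-n) := by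
      rw [← conj_zpow, h1, inv_zpow, zpow_neg]
    rw [← h2]; group
  have hns : ∀ v, ¬ t.SameCycle v (a v) := by
    rintro v ⟨n, hn⟩
    rcases Int.even_or_odd' n with ⟨i, rfl | rfl⟩
    · apply ha' ((t ^ i) v)
      have := congrArg (fun p : Perm α => p v) (hat i)
      simp only [Perm.mul_apply] at this
      rw [this, ← hn, ← Perm.mul_apply, ← zpow_add]
      congr 2; ring
    · apply hb' ((t ^ i) v)
      have := congrArg (fun p : Perm α => p v) (hbt i)
      simp only [Perm.mul_apply] at this
      have hbv : b v = (t ^ (2 * i)) v := by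
        have e1 : b v = t⁻¹ (a v) := by
          rw [ht, mul_inv_rev, hainv, hbinv, Perm.mul_apply, haa]
        rw [e1, ← hn, ← Perm.mul_apply, ← zpow_neg_one, ← zpow_add]
        congr 2; ring
      rw [this, hbv, ← Perm.mul_apply, ← zpow_add]
      congr 2; ring
  let Q := Quotient (SameCycle.setoid t)
  let e := Finite.equivFin Q
  let r : α → ℕ := fun v => (e (Quotient.mk _ v) : ℕ)
  have hr : ∀ u v, r u = r v ↔ t.SameCycle u v := by
    intro u v
    simp only [r]
    rw [Fin.val_inj, e.apply_eq_iff_eq, Quotient.eq]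
    rfl
  have hrt : ∀ v, r (t v) = r v := fun v => (hr _ _).2 (by simp [SameCycle.refl])
  refine ⟨fun v => decide (r v < r (a v)), fun v => ⟨?_, ?_⟩⟩
  · have h1 : r v ≠ r (a v) := fun h => hns v ((hr _ _).1 h)
    change decide (r (a v) < r (a (a v))) = !decide (r v < r (a v))
    rw [haa]
    rcases lt_or_gt_of_ne h1 with h | h
    · simp [h, not_lt.2 h.le]
    · simp [h, not_lt.2 h.le]
  · have h1 : r v ≠ r (a v) := fun h => hns v ((hr _ _).1 h)
    have h2 : r (b v) = r (a v) := by
      rw [hr]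
      refine ⟨1, ?_⟩
      rw [zpow_one, ht, Perm.mul_apply, hbb]
    have h3 : r (a (b v)) = r v := hrt v
    change decide (r (b v) < r (a (b v))) = !decide (r v < r (a v))
    rw [h2, h3]
    rcases lt_or_gt_of_ne h1 with h | h
    · simp [h, not_lt.2 h.le]
    · simp [h, not_lt.2 h.le]

variable {I : Type} [Fintype I] [DecidableEq I]

/-- `g` induces `σ` on the blocks. -/
def Ind (g : Perm (I × Bool)) (σ : Perm I) : Prop := ∀ x, (g x).1 = σ x.1

/-- `g` preserves blocks and has character value `e`. -/
def XX (g : Perm (I × Bool)) (e : ℤˣ) : Prop := ∃ σ : Perm I, Ind g σ ∧ sign g * sign σ = e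

theorem Ind.mul {g h : Perm (I × Bool)} {σ τ : Perm I} (hg : Ind g σ) (hh : Ind h τ) :
    Ind (g * h) (σ * τ) := fun x => by
  rw [Perm.mul_apply, hg, hh, Perm.mul_apply]

theorem Ind.inv {g : Perm (I × Bool)} {σ : Perm I} (hg : Ind g σ) : Ind g⁻¹ σ⁻¹ := fun x => by
  rw [Perm.eq_inv_iff_eq, ← hg]; simp

theorem Ind.uniq {g : Perm (I × Bool)} {σ τ : Perm I} (hg : Ind g σ) (hh : Ind g τ) : σ = τ := by
  ext i
  rw [← hg (i, true), ← hh (i, true)]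

theorem XX.mul {g h : Perm (I × Bool)} {e e' : ℤˣ} (hg : XX g e) (hh : XX h e') :
    XX (g * h) (e * e') := by
  obtain ⟨σ, h1, rfl⟩ := hg
  obtain ⟨τ, h2, rfl⟩ := hh
  exact ⟨_, h1.mul h2, by simp only [Perm.sign_mul]; exact mul_mul_mul_comm _ _ _ _⟩

theorem XX.inv {g : Perm (I × Bool)} {e : ℤˣ} (hg : XX g e) : XX g⁻¹ e := by
  obtain ⟨σ, h1, rfl⟩ := hg
  exact ⟨_, h1.inv, by simp only [Perm.sign_inv]⟩

theorem XX.uniq {g : Perm (I × Bool)} {e e' : ℤˣ} (hg : XX g e) (hg' : XX g e') : e = e' := by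
  obtain ⟨σ, h1, rfl⟩ := hg
  obtain ⟨τ, h2, rfl⟩ := hg'
  rw [h1.uniq h2]

/-- some odd element of the intersection of `H` with its conjugate by `g` -/
def PP (g : Perm (I × Bool)) : Prop :=
  ∃ (x y : Perm (I × Bool)) (e : ℤˣ), x * g = g * y ∧ XX x (-1) ∧ XX y e

theorem PP.conj {g h1 h2 : Perm (I × Bool)} {e1 e2 : ℤˣ} (hg : PP g) (H1 : XX h1 e1)
    (H2 : XX h2 e2) : PP (h1 * g * h2) := by
  obtain ⟨x, y, e, hxy, hx, hy⟩ := hg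
  refine ⟨h1 * x * h1⁻¹, h2⁻¹ * y * h2, _, ?_, ?_, (H2.inv.mul hy).mul H2⟩
  · calc h1 * x * h1⁻¹ * (h1 * g * h2) = h1 * (x * g) * h2 := by group
      _ = _ := by rw [hxy]; group
  · have := (H1.mul hx).mul H1.inv
    rwa [mul_right_comm, Int.units_mul_self, one_mul] at this

theorem symm_of_PP {g A B : Perm (I × Bool)} {e : ℤˣ} (hP : PP g) (hg : g⁻¹ = A * g * B)
    (hA : XX A e) (hB : XX B e) :
    ∃ δ δ', XX δ 1 ∧ XX δ' 1 ∧ g⁻¹ = δ * g * δ' := by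
  rcases Int.units_eq_one_or e with rfl | rfl
  · exact ⟨A, B, hA, hB, hg⟩
  obtain ⟨x, y, e', hxy, hx, hy⟩ := hP
  have h1 : x * g * y⁻¹ = g := by rw [hxy]; group
  rcases Int.units_eq_one_or e' with rfl | rfl
  · have h2 : (A⁻¹ * y * A) * g = g * (B * x * B⁻¹) := by
      have h3 : y * g⁻¹ = g⁻¹ * x := by
        have : y = g⁻¹ * (x * g) := by rw [hxy]; group
        rw [this]; group
      rw [hg] at h3
      calc (A⁻¹ * y * A) * g = A⁻¹ * (y * (A * g * B)) * B⁻¹ := by group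
        _ = _ := by rw [h3]; group
    have h4 : (A⁻¹ * y * A) * g * (B * x * B⁻¹)⁻¹ = g := by rw [h2]; group
    refine ⟨A * (x * (A⁻¹ * y * A)), ((B * x * B⁻¹)⁻¹ * y⁻¹) * B, ?_, ?_, ?_⟩
    · simpa using hA.mul (hx.mul ((hA.inv.mul hy).mul hA))
    · simpa using ((((hB.mul hx).mul hB.inv).inv).mul hy.inv).mul hB
    · rw [hg]
      conv_lhs => rw [← h1, ← h4]
      group
  · refine ⟨A * x, y⁻¹ * B, ?_, ?_, ?_⟩
    · simpa using hA.mul hx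
    · simpa using hy.inv.mul hB
    · rw [hg]
      conv_lhs => rw [← h1]
      group

/-- the element of the wreath product given by `σ` and flips `f` -/
def EE (σ : Perm I) (f : I → Bool) : Perm (I × Bool) :=
  (prodCongrLeft fun _ => σ) * prodCongrRight (fun i => if f i then Equiv.boolNot else 1)

theorem EE_apply (σ : Perm I) (f : I → Bool) (i : I) (b : Bool) :
    EE σ f (i, b) = (σ i, xor (f i) b) := by
  simp only [EE, Perm.mul_apply, prodCongrRight_apply]
  cases h : f i <;> simp

theorem EE_ind (σ : Perm I) (f : I → Bool) : Ind (EE σ f) σ := by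
  rintro ⟨i, b⟩; rw [EE_apply]

/-- sign of a flip function -/
def FS (f : I → Bool) : ℤˣ := ∏ i, if f i then -1 else 1

theorem EE_sign (σ : Perm I) (f : I → Bool) : sign (EE σ f) = FS f := by
  rw [EE, Perm.sign_mul, sign_prodCongrLeft, sign_prodCongrRight]
  have h2 : (sign (Equiv.boolNot : Perm Bool)) = -1 := by decide
  have : (∏ _ : Bool, sign σ) = 1 := by simp
  rw [this, one_mul, FS]
  refine Finset.prod_congr rfl (fun i _ => ?_)
  split_ifs with h
  · exact h2
  · simp

theorem EE_XX (σ : Perm I) (f : I → Bool) : XX (EE σ f) (sign σ * FS f) :=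
  ⟨σ, EE_ind σ f, by rw [EE_sign, mul_comm]⟩

theorem exists_EE {g : Perm (I × Bool)} {σ : Perm I} (hg : Ind g σ) : ∃ f, g = EE σ f := by
  refine ⟨fun i => (g (i, false)).2, ?_⟩
  have hne : ∀ i, (g (i, true)).2 = !(g (i, false)).2 := by
    intro i
    have : g (i, true) ≠ g (i, false) := fun h => by simpa using g.injective h
    by_contra h
    apply this
    apply Prod.ext
    · rw [hg, hg]
    · revert h; cases (g (i, true)).2 <;> cases (g (i, false)).2 <;> simp
  ext1 ⟨i, b⟩
  rw [EE_apply]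
  apply Prod.ext
  · rw [hg]
  · cases b
    · simp
    · simp [hne]

theorem exists_ind (g : Perm (I × Bool)) (h : ∀ i, (g (i, false)).1 = (g (i, true)).1) :
    ∃ σ : Perm I, Ind g σ := by
  let m : I → I := fun i => (g (i, false)).1
  have hm : ∀ x, (g x).1 = m x.1 := by
    rintro ⟨i, b⟩
    cases b
    · rfl
    · exact (h i).symm
  have hs : Function.Surjective m := by
    intro j
    refine ⟨(g⁻¹ (j, true)).1, ?_⟩
    rw [← hm]; simp
  exact ⟨Equiv.ofBijective m (Finite.injective_iff_bijective.1 (Finite.injective_iff_surjective.2 hs)),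
    fun x => hm x⟩

/-- standard double coset representative -/
def GG (σ : Perm I) : Perm (I × Bool) := prodCongrLeft (fun b => if b then σ else 1)

theorem GG_true (σ : Perm I) (i : I) : GG σ (i, true) = (σ i, true) := by simp [GG]

theorem GG_false (σ : Perm I) (i : I) : GG σ (i, false) = (i, false) := by simp [GG]

theorem exists_pair (g : Perm (I × Bool)) (h : ∀ w, (g w).2 = w.2) :
    ∃ α β : Perm I, ∀ i, g (i, false) = (α i, false) ∧ g (i, true) = (β i, true) := by
  have key : ∀ b : Bool, ∃ α : Perm I, ∀ i, g (i, b) = (α i, b) := by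
    intro b
    have hinj : Function.Injective (fun i => (g (i, b)).1) := by
      intro i j hij
      have : g (i, b) = g (j, b) := Prod.ext hij (by rw [h, h])
      simpa using g.injective this
    refine ⟨Equiv.ofBijective _ (Finite.injective_iff_bijective.1 hinj), fun i => ?_⟩
    exact Prod.ext rfl (h _)
  obtain ⟨α, hα⟩ := key false
  obtain ⟨β, hβ⟩ := key true
  exact ⟨α, β, fun i => ⟨hα i, hβ i⟩⟩

theorem color_XX (c : I × Bool → Bool) (hc : ∀ i, c (i, true) = !c (i, false)) :
    ∃ h : Perm (I × Bool), (∃ e, XX h e) ∧ ∀ v, (h v).2 = c v := by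
  refine ⟨EE 1 (fun i => c (i, false)), ⟨_, EE_XX _ _⟩, ?_⟩
  rintro ⟨i, b⟩
  rw [EE_apply]
  cases b <;> simp [hc]

theorem normal_form (g : Perm (I × Bool)) :
    ∃ (h1 h2 : Perm (I × Bool)) (e1 e2 : ℤˣ) (σ : Perm I),
      XX h1 e1 ∧ XX h2 e2 ∧ g = h1 * GG σ * h2 := by
  set a : Perm (I × Bool) := EE 1 (fun _ => true) with ha
  have haa : ∀ i b, a (i, b) = (i, !b) := by
    intro i b; rw [ha, EE_apply]; simp
  have ha2 : a * a = 1 := by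
    ext1 ⟨i, b⟩; rw [Perm.mul_apply, haa, haa]; simp
  have ha3 : ∀ x, a x ≠ x := by
    rintro ⟨i, b⟩; rw [haa]; simp
  obtain ⟨c, hc⟩ := two_color a (g * a * g⁻¹) ha2
    (by rw [show g * a * g⁻¹ * (g * a * g⁻¹) = g * (a * a) * g⁻¹ by group, ha2]; group) ha3
    (by
      intro x hx
      apply ha3 (g⁻¹ x)
      rw [Perm.eq_inv_iff_eq]
      exact hx)
  obtain ⟨h1, ⟨e1, he1⟩, hh1⟩ := color_XX c (fun i => by rw [← (hc (i, false)).1, haa]; rfl)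
  obtain ⟨h2, ⟨e2, he2⟩, hh2⟩ := color_XX (fun v => c (g v)) (fun i => by
    rw [← (hc (g (i, false))).2]; simp [haa])
  have hg' : ∀ w, ((h1 * g * h2⁻¹) w).2 = w.2 := by
    intro w
    rw [Perm.mul_apply, Perm.mul_apply, hh1]
    have := hh2 (h2⁻¹ w)
    rw [← this]; simp
  obtain ⟨α, β, hab⟩ := exists_pair _ hg'
  have h3 : h1 * g * h2⁻¹ = EE α (fun _ => false) * GG (α⁻¹ * β) := by
    ext1 ⟨i, b⟩
    rw [Perm.mul_apply (EE _ _)]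
    cases b
    · rw [(hab i).1, GG_false, EE_apply]; simp
    · rw [(hab i).2, GG_true, EE_apply]; simp
  refine ⟨h1⁻¹ * EE α (fun _ => false), h2, _, _, α⁻¹ * β, he1.inv.mul (EE_XX _ _), he2, ?_⟩
  rw [mul_assoc h1⁻¹, ← h3]; group

theorem exists_swapPerm (g : Perm (I × Bool)) :
    ∃ (A B : Perm (I × Bool)) (e : ℤˣ), XX A e ∧ XX B e ∧ g⁻¹ = A * g * B := by
  obtain ⟨h1, h2, e1, e2, σ, H1, H2, rfl⟩ := normal_form g
  have hconj : IsConj σ σ⁻¹ := by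
    rw [isConj_iff_cycleType_eq, cycleType_inv]
  obtain ⟨ρ, hρ⟩ := isConj_iff.1 hconj
  have hq : (GG σ)⁻¹ = EE ρ (fun _ => false) * GG σ * (EE ρ (fun _ => false))⁻¹ := by
    rw [eq_mul_inv_iff_mul_eq, inv_mul_eq_iff_eq_mul]
    have hρ' : ∀ i, σ (ρ (σ i)) = ρ i := by
      intro i
      have h2 : ρ * σ = σ⁻¹ * ρ := by rw [← hρ]; group
      have := congrArg (fun p : Perm I => σ (p i)) h2
      simpa using this
    ext1 ⟨i, b⟩
    simp only [Perm.mul_apply]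
    cases b
    · simp [GG_false, EE_apply]
    · simp [GG_true, EE_apply, hρ']
  have hE := EE_XX ρ (fun _ => false)
  set q := EE ρ (fun _ => false)
  refine ⟨h2⁻¹ * q * h1⁻¹, h2⁻¹ * q⁻¹ * h1⁻¹, _, (H2.inv.mul hE).mul H1.inv,
    (H2.inv.mul hE.inv).mul H1.inv, ?_⟩
  rw [mul_inv_rev, mul_inv_rev, hq]
  group

/-- conditions for `EE τ f` to centralize both matchings -/
def QQ (σ τ : Perm I) (f : I → Bool) : Prop :=
  ∀ i, f (σ i) = f i ∧ (f i = false → τ (σ i) = σ (τ i)) ∧ (f i = true → σ (τ (σ i)) = τ i)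

theorem PP_GG_iff (σ : Perm I) :
    PP (GG σ) ↔ ∃ τ f, QQ σ τ f ∧ sign τ * FS f = -1 := by
  have hinvf : ∀ i, (GG σ)⁻¹ (i, false) = (i, false) := fun i => by
    rw [Perm.inv_eq_iff_eq, GG_false]
  have hinvt : ∀ i, (GG σ)⁻¹ (i, true) = (σ⁻¹ i, true) := fun i => by
    rw [Perm.inv_eq_iff_eq, GG_true]; simp
  constructor
  · rintro ⟨x, y, e, hxy, hx, ⟨μ, hμ, -⟩⟩
    obtain ⟨τ, hτ, hs⟩ := hx
    obtain ⟨f, rfl⟩ := exists_EE hτ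
    refine ⟨τ, f, ?_, by rw [← hs, EE_sign, mul_comm]⟩
    obtain ⟨f', rfl⟩ := exists_EE hμ
    intro i
    have h0 := congrArg (fun p : Perm (I × Bool) => p (i, false)) hxy
    have h1 := congrArg (fun p : Perm (I × Bool) => p (i, true)) hxy
    simp only [Perm.mul_apply, GG_false, GG_true, EE_apply] at h0 h1
    cases hf : f i <;> cases hf' : f' i <;> cases hfs : f (σ i) <;>
      simp [hf, hf', hfs, GG_false, GG_true] at h0 h1 ⊢
    · rw [h1, h0]
    · rw [h0, h1]
  · rintro ⟨τ, f, hQ, hs⟩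
    have hX := EE_XX τ f
    rw [hs] at hX
    obtain ⟨μ, hμ⟩ := exists_ind ((GG σ)⁻¹ * EE τ f * GG σ) (by
      intro i
      obtain ⟨q1, q2, q3⟩ := hQ i
      simp only [Perm.mul_apply, GG_false, GG_true, EE_apply, q1]
      cases hf : f i
      · simp [hinvf, hinvt, q2 hf]
      · simp only [Bool.xor_false, Bool.xor_true, Bool.not_true, hinvf, hinvt]
        rw [Perm.inv_eq_iff_eq, q3 hf])
    exact ⟨EE τ f, (GG σ)⁻¹ * EE τ f * GG σ, _, by group, hX, ⟨μ, hμ, rfl⟩⟩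

end CombPart
section CyclePart
open Equiv Equiv.Perm

theorem sign_invol {α : Type} [Fintype α] [DecidableEq α] (r : Perm α) (hr : r * r = 1) :
    sign r = (-1) ^ (r.support.card / 2) := by
  have h2 : r ^ 2 = 1 := by rw [sq, hr]
  have h3 : ∀ n ∈ r.cycleType, n = 2 := by
    intro n hn
    have h4 : n ∣ 2 := (dvd_of_mem_cycleType hn).trans (orderOf_dvd_of_pow_eq_one h2)
    have h5 := two_le_of_mem_cycleType hn
    have := Nat.le_of_dvd (by norm_num) h4
    omega
  have h4 := Multiset.eq_replicate_card.2 h3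
  have h5 := r.sum_cycleType
  rw [sign_of_cycleType]
  rw [h5]
  rw [h4] at h5
  simp at h5
  rw [← h5, pow_add, pow_mul']
  simp

theorem sign_rev (m : ℕ) (hm : Odd m) : sign (Fin.revPerm : Perm (Fin m)) = (-1) ^ (m / 2) := by
  obtain ⟨n, rfl⟩ := hm
  rw [sign_invol _ (by ext; simp)]
  have : (Fin.revPerm : Perm (Fin (2 * n + 1))).support = Finset.univ.erase ⟨n, by omega⟩ := by
    ext i
    simp [Fin.ext_iff, Fin.val_rev]
    omega
  rw [this, Finset.card_erase_of_mem (Finset.mem_univ _)]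
  congr 1
  simp
  omega

theorem exists_reflection {I : Type} [Fintype I] [DecidableEq I] (c : Perm I) (hc : c.IsCycle)
    (hodd : Odd c.support.card) :
    ∃ τ : Perm I, (∀ i, i ∉ c.support → τ i = i) ∧ (∀ i, τ (c i) = c⁻¹ (τ i)) ∧
      sign τ = (-1) ^ (c.support.card / 2) := by
  have h2 := hc.two_le_card_support
  obtain ⟨n, hn⟩ : ∃ n, c.support.card = n + 2 := ⟨c.support.card - 2, by omega⟩
  let e : Fin (n + 2) ≃ {x // x ∈ c.support} := (c.support.equivFinOfCardEq hn).symm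
  set d : Perm I := (finRotate (n + 2)).extendDomain e with hd
  set r : Perm I := (Fin.revPerm : Perm (Fin (n + 2))).extendDomain e with hr
  have hdc : d.IsCycle := (isCycle_finRotate).extendDomain e
  have hrd : r * d = d⁻¹ * r := by
    rw [hd, hr, extendDomain_inv, extendDomain_mul, extendDomain_mul]
    congr 1
    rw [eq_inv_mul_iff_mul_eq]
    ext1 i
    simp only [Perm.mul_apply, Fin.revPerm_apply, finRotate_succ_apply]
    rw [Fin.rev_add]
    simp
  have hcard : d.support.card = c.support.card := by
    rw [hd, card_support_extend_domain, hn, support_finRotate]; simp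
  obtain ⟨u, hu⟩ := isConj_iff.1 (hdc.isConj hc hcard)
  have hτ : (u * r * u⁻¹) * c = c⁻¹ * (u * r * u⁻¹) := by
    rw [← hu]
    calc _ = u * (r * d) * u⁻¹ := by group
      _ = _ := by rw [hrd]; group
  refine ⟨u * r * u⁻¹, ?_, ?_, ?_⟩
  · intro i hi
    have : u⁻¹ i ∉ c.support := by
      intro h
      have h3 : u⁻¹ i ∈ d.support := by
        rw [mem_support, hd]
        intro h4
        have h5 := extendDomain_apply_subtype (finRotate (n + 2)) e h
        rw [h4] at h5
        have h6 := mem_support.1 (show e.symm ⟨u⁻¹ i, h⟩ ∈ (finRotate (n + 2)).support by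
          rw [support_finRotate]; simp)
        apply h6
        apply e.injective
        ext
        rw [← h5]
        simp
      rw [← hu, support_conj] at hi
      apply hi
      rw [Finset.mem_map]
      exact ⟨_, h3, by simp⟩
    rw [Perm.mul_apply, Perm.mul_apply, hr, extendDomain_apply_not_subtype _ _ this]
    simp
  · intro i
    exact congrArg (fun p : Perm I => p i) hτ
  · rw [Perm.sign_mul, Perm.sign_mul, Perm.sign_inv, mul_comm, ← mul_assoc, Int.units_mul_self,
      one_mul, hr, sign_extendDomain, sign_rev _ (hn ▸ hodd), hn]

theorem hinvself {α : Type} (c : Perm α) (x : α) : c (c⁻¹ x) = x := by simp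

variable {I : Type} [Fintype I] [DecidableEq I]

theorem FS_split (f : I → Bool) (S : Finset I) (hS : ∀ i ∈ S, f i = true) :
    FS f = FS (fun i => f i && decide (i ∉ S)) * (-1) ^ S.card := by
  have h1 : ((-1 : ℤˣ)) ^ S.card = ∏ i, if i ∈ S then -1 else 1 := by
    rw [Finset.prod_ite_mem]; simp
  rw [h1, FS, FS, ← Finset.prod_mul_distrib]
  refine Finset.prod_congr rfl (fun i _ => ?_)
  by_cases hi : i ∈ S
  · simp [hi, hS i hi]
  · simp [hi]

theorem FS_false (f : I → Bool) (hf : ∀ i, f i = false) : FS f = 1 := by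
  simp [FS, hf]

theorem QQ_mul (σ τ ρ c : Perm I) (f : I → Bool) (hc : c ∈ σ.cycleFactorsFinset)
    (hQ : QQ σ τ f) (hf : ∀ i ∈ c.support, f i = true)
    (h1 : ∀ i, i ∉ c.support → ρ i = i) (h2 : ∀ i, ρ (c i) = c⁻¹ (ρ i)) :
    QQ σ (τ * ρ) (fun i => f i && decide (i ∉ c.support)) := by
  obtain ⟨hcyc, hcσ⟩ := mem_cycleFactorsFinset_iff.1 hc
  have hρs : ∀ i ∈ c.support, ρ i ∈ c.support := by
    intro i hi
    by_contra h
    have := ρ.injective (h1 _ h)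
    rw [this] at h
    exact h hi
  have hσs : ∀ i, σ i ∈ c.support ↔ i ∈ c.support := by
    intro i
    have h3 := mem_cycleFactorsFinset_support_le hc
    constructor
    · intro hi
      have h4 : c⁻¹ (σ i) ∈ c.support := by
        rw [← support_inv, apply_mem_support, support_inv]; exact hi
      have h5 := hcσ _ h4
      rw [hinvself] at h5
      rw [σ.injective h5]; exact h4
    · intro hi
      rw [← hcσ i hi, apply_mem_support]; exact hi
  intro i
  refine ⟨?_, ?_, ?_⟩
  · simp only [(hQ i).1, hσs]
  · intro hfi
    by_cases hi : i ∈ c.support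
    · rw [Perm.mul_apply, Perm.mul_apply, ← hcσ i hi, h2]
      set j := ρ i with hj
      have hjs := hρs i hi
      have h4 : c⁻¹ j ∈ c.support := by
        rw [← support_inv, apply_mem_support, support_inv]; exact hjs
      have h5 := hcσ _ h4
      rw [hinvself] at h5
      have h6 := (hQ (c⁻¹ j)).2.2 (hf _ h4)
      rw [← h5] at h6
      exact h6.symm
    · have hf' : f i = false := by simpa [hi] using hfi
      rw [Perm.mul_apply, Perm.mul_apply, h1 _ hi, h1 _ (by rwa [hσs])]
      exact (hQ i).2.1 hf'
  · intro hfi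
    simp only [Bool.and_eq_true, decide_eq_true_eq] at hfi
    rw [Perm.mul_apply, Perm.mul_apply, h1 _ hfi.2, h1 _ (by rw [hσs]; exact hfi.2)]
    exact (hQ i).2.2 hfi.1

theorem unit_pow3 (m : ℕ) (hm : m % 4 = 3) : ((-1 : ℤˣ)) ^ (m / 2) * (-1) ^ m = 1 := by
  have h1 : Odd (m / 2) := by rw [Nat.odd_iff]; omega
  have h2 : Odd m := by rw [Nat.odd_iff]; omega
  rw [h1.neg_one_pow, h2.neg_one_pow]; rfl

theorem R_of_cycleType (σ : Perm I) (hsum : σ.cycleType.sum = Fintype.card I)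
    (hnd : σ.cycleType.Nodup) (h3 : ∀ m ∈ σ.cycleType, m % 4 = 3) :
    ∀ n (τ : Perm I) (f : I → Bool), (Finset.univ.filter fun i => f i = true).card ≤ n →
      QQ σ τ f → sign τ * FS f = 1 := by
  have h0 : ∀ (τ : Perm I) (f : I → Bool), (∀ i, f i = false) →
      QQ σ τ f → sign τ * FS f = 1 := by
    intro τ f hf hQ
    have hle : Subgroup.centralizer {σ} ≤ alternatingGroup I := by
      rw [centralizer_le_alternating_iff]
      refine ⟨fun m hm => ?_, by omega, Multiset.nodup_iff_count_le_one.1 hnd⟩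
      have := h3 m hm
      rw [Nat.odd_iff]; omega
    have hτ : τ ∈ Subgroup.centralizer {σ} := by
      rw [Subgroup.mem_centralizer_singleton_iff]
      ext1 i
      exact (hQ i).2.1 (hf i)
    have := hle hτ
    rw [mem_alternatingGroup] at this
    rw [this, FS_false f hf, one_mul]
  have hsupp : σ.support = Finset.univ := by
    rw [← Finset.card_eq_iff_eq_univ, ← sum_cycleType, hsum]
  intro n
  induction n with
  | zero =>
    intro τ f hn
    apply h0
    intro i
    by_contra h
    have : i ∈ (Finset.univ.filter fun i => f i = true) := by simpa using h
    rw [Finset.card_eq_zero.1 (Nat.le_zero.1 hn)] at this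
    simp at this
  | succ n ih =>
    intro τ f hn hQ
    by_cases hf : ∀ i, f i = false
    · exact h0 τ f hf hQ
    push Not at hf
    obtain ⟨i, hi⟩ := hf
    have hi : f i = true := by simpa using hi
    have his : i ∈ σ.support := by rw [hsupp]; simp
    have hc := cycleOf_mem_cycleFactorsFinset_iff.2 his
    have hcf : ∀ j ∈ (σ.cycleOf i).support, f j = true := by
      intro j hj
      rw [mem_support_cycleOf_iff] at hj
      obtain ⟨m, hm⟩ := hj.1.exists_nat_pow_eq
      rw [← hm]
      clear hm
      induction m with
      | zero => simpa using hi
      | succ m ihm => rw [pow_succ', Perm.mul_apply, (hQ _).1]; exact ihm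
    obtain ⟨hcyc, hcσ⟩ := mem_cycleFactorsFinset_iff.1 hc
    have hm3 : (σ.cycleOf i).support.card % 4 = 3 := by
      apply h3
      rw [cycleType_def, Multiset.mem_map]
      exact ⟨_, hc, rfl⟩
    obtain ⟨ρ, hρ1, hρ2, hρ3⟩ := exists_reflection (σ.cycleOf i) hcyc
      (by rw [Nat.odd_iff]; omega)
    have hQ' := QQ_mul σ τ ρ _ f hc hQ hcf hρ1 hρ2
    have := ih _ _ ?_ hQ'
    · rw [FS_split f _ hcf]
      rw [Perm.sign_mul, hρ3] at this
      have h5 := unit_pow3 _ hm3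
      generalize (-1 : ℤˣ) ^ ((σ.cycleOf i).support.card / 2) = A at *
      generalize (-1 : ℤˣ) ^ ((σ.cycleOf i).support.card) = B at *
      have hAB : A = B := by
        rw [← mul_one A, ← Int.units_mul_self B, ← mul_assoc, h5, one_mul]
      rw [← hAB, ← this]
      exact (by rw [mul_assoc, mul_comm A])
    · rw [← Nat.lt_succ_iff]
      refine lt_of_lt_of_le (Finset.card_lt_card ?_) hn
      refine Finset.ssubset_iff_of_subset (fun j hj => ?_) |>.2 ⟨i, by simpa using hi, ?_⟩
      · simp only [Finset.mem_filter, Finset.mem_univ, true_and, Bool.and_eq_true] at hj ⊢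
        exact hj.1
      · have : i ∈ (σ.cycleOf i).support := by
          rw [mem_support_cycleOf_iff]; exact ⟨SameCycle.refl _ _, his⟩
        simp only [Finset.mem_filter, Bool.and_eq_true, decide_eq_true_eq]
        tauto

theorem cycleType_of_R (σ : Perm I) (hR : ∀ (τ : Perm I) (f : I → Bool), QQ σ τ f →
    sign τ * FS f = 1) : σ.cycleType.sum = Fintype.card I ∧ σ.cycleType.Nodup ∧
      ∀ m ∈ σ.cycleType, m % 4 = 3 := by
  have hle : Subgroup.centralizer {σ} ≤ alternatingGroup I := by
    intro τ hτ
    rw [Subgroup.mem_centralizer_singleton_iff] at hτ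
    have := hR τ (fun _ => false) (fun i => ⟨rfl, fun _ =>
      congrArg (fun p : Perm I => p i) hτ, by simp⟩)
    rw [FS_false _ (fun _ => rfl), mul_one] at this
    rwa [mem_alternatingGroup]
  rw [centralizer_le_alternating_iff] at hle
  obtain ⟨hodd, -, hcount⟩ := hle
  have hfs : ∀ S : Finset I, FS (fun i => decide (i ∈ S)) = (-1) ^ S.card := by
    intro S
    rw [FS_split _ S (by simp), FS_false, one_mul]
    simp
  have hsupp : σ.support = Finset.univ := by
    by_contra h
    rw [Finset.eq_univ_iff_forall] at h
    push Not at h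
    obtain ⟨i, hi⟩ := h
    have hi : σ i = i := by simpa using hi
    have := hR 1 (fun j => decide (j ∈ ({i} : Finset I))) (fun j => by
      have h1 : σ j = i ↔ j = i := by
        constructor
        · intro h; apply σ.injective; rw [h, hi]
        · rintro rfl; exact hi
      refine ⟨by simp [h1], by simp, ?_⟩
      intro h
      have : j = i := by simpa using h
      rw [this]; simp [hi])
    rw [hfs] at this
    simp at this
  refine ⟨by rw [sum_cycleType, hsupp, Finset.card_univ], Multiset.nodup_iff_count_le_one.2 hcount,
    ?_⟩
  intro m hm
  have hmo := hodd m hm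
  rw [cycleType_def, Multiset.mem_map] at hm
  obtain ⟨c, hc, rfl⟩ := hm
  have hc : c ∈ σ.cycleFactorsFinset := hc
  simp only [Function.comp] at hmo ⊢
  obtain ⟨hcyc, hcσ⟩ := mem_cycleFactorsFinset_iff.1 hc
  obtain ⟨ρ, hρ1, hρ2, hρ3⟩ := exists_reflection c hcyc hmo
  have hσs : ∀ i, σ i ∈ c.support ↔ i ∈ c.support := by
    intro i
    constructor
    · intro hi
      have h4 : c⁻¹ (σ i) ∈ c.support := by
        rw [← support_inv, apply_mem_support, support_inv]; exact hi
      have h5 := hcσ _ h4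
      rw [hinvself] at h5
      rw [σ.injective h5]; exact h4
    · intro hi
      rw [← hcσ i hi, apply_mem_support]; exact hi
  have hρs : ∀ i ∈ c.support, ρ i ∈ c.support := by
    intro i hi
    by_contra h
    have := ρ.injective (hρ1 _ h)
    rw [this] at h
    exact h hi
  have := hR ρ (fun i => decide (i ∈ c.support)) (fun i => by
    refine ⟨by simp only [hσs], ?_, ?_⟩
    · intro h
      have h : i ∉ c.support := by simpa only [decide_eq_false_iff_not] using h
      rw [hρ1 _ h, hρ1 _ (by rwa [hσs])]
    · intro h
      have h : i ∈ c.support := by simpa only [decide_eq_true_eq] using h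
      rw [← hcσ i h, hρ2, ← hcσ, hinvself]
      rw [← support_inv, apply_mem_support, support_inv]; exact hρs i h)
  rw [hfs, hρ3, hmo.neg_one_pow] at this
  by_contra h
  have h2 : Even (c.support.card / 2) := by
    rw [Nat.odd_iff] at hmo
    rw [Nat.even_iff]; omega
  rw [h2.neg_one_pow] at this
  exact absurd this (by decide)

theorem exists_seq (σ : Perm I) (hI : 0 < Fintype.card I)
    (hR : ∀ (τ : Perm I) (f : I → Bool), QQ σ τ f → sign τ * FS f = 1) :
    ∃ (s : ℕ) (b : Fin s → ℕ), 0 < s ∧ StrictAnti b ∧ (∀ i, 0 < b i) ∧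
        Fintype.card I + s = 4 * (∑ i, b i) := by
  obtain ⟨hsum, hnd, h3⟩ := cycleType_of_R σ hR
  set M : Finset ℕ := ⟨σ.cycleType, hnd⟩ with hM
  have hMm : ∀ m ∈ M, m % 4 = 3 := h3
  have hMs : ∑ m ∈ M, m = Fintype.card I := by
    rw [← hsum, hM, Finset.sum]; simp
  let e := M.orderIsoOfFin rfl
  have hs : ∑ i : Fin M.card, ((e i : ℕ)) = Fintype.card I := by
    rw [← hMs, ← Finset.sum_coe_sort M]
    exact e.toEquiv.sum_comp (fun x : M => (x : ℕ))
  refine ⟨M.card, fun i => ((e (Fin.rev i) : ℕ) + 1) / 4, ?_, ?_, ?_, ?_⟩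
  · rw [Finset.card_pos]
    by_contra h
    rw [Finset.not_nonempty_iff_eq_empty] at h
    rw [h] at hMs
    simp at hMs
    omega
  · intro i j hij
    have h1 : e j.rev < e i.rev := e.strictMono (Fin.rev_lt_rev.2 hij)
    have h1 : (e j.rev : ℕ) < e i.rev := h1
    have h2 := hMm _ (e j.rev).2
    have h4 := hMm _ (e i.rev).2
    change ((e j.rev : ℕ) + 1) / 4 < ((e i.rev : ℕ) + 1) / 4
    omega
  · intro i
    have h4 := hMm _ (e i.rev).2
    change 0 < ((e i.rev : ℕ) + 1) / 4
    omega
  · rw [Finset.mul_sum]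
    have : ∀ i : Fin M.card, 4 * (((e (Fin.rev i) : ℕ) + 1) / 4) = (e (Fin.rev i) : ℕ) + 1 := by
      intro i
      have h4 := hMm _ (e i.rev).2
      omega
    rw [Finset.sum_congr rfl (fun i _ => this i), Finset.sum_add_distrib,
      Equiv.sum_comp Fin.revPerm (fun i => (e i : ℕ)) |> (fun h => (by simpa using h :
        ∑ i : Fin M.card, (e (Fin.rev i) : ℕ) = ∑ i, (e i : ℕ))), hs]
    simp

theorem exists_R (s : ℕ) (b : Fin s → ℕ) (hb : StrictAnti b) (hpos : ∀ i, 0 < b i)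
    (hk : Fintype.card I + s = 4 * (∑ i, b i)) :
    ∃ σ : Perm I, ∀ (τ : Perm I) (f : I → Bool), QQ σ τ f → sign τ * FS f = 1 := by
  set M : Multiset ℕ := Multiset.map (fun i => 4 * b i - 1) (Finset.univ : Finset (Fin s)).val
    with hM
  have hsum : M.sum = Fintype.card I := by
    have h1 : M.sum = ∑ i, (4 * b i - 1) := rfl
    have h2 : ∑ i, (4 * b i - 1) + s = ∑ i, (4 * b i) := by
      have : ∑ i : Fin s, 4 * b i = ∑ i : Fin s, ((4 * b i - 1) + 1) :=
        Finset.sum_congr rfl (fun i _ => by have := hpos i; omega)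
      rw [this, Finset.sum_add_distrib]; simp
    rw [← Finset.mul_sum] at h2
    omega
  have hmem : ∀ m ∈ M, 2 ≤ m ∧ m % 4 = 3 := by
    intro m hm
    rw [hM, Multiset.mem_map] at hm
    obtain ⟨i, -, rfl⟩ := hm
    have := hpos i
    omega
  obtain ⟨σ, hσ⟩ := (exists_with_cycleType_iff I (m := M)).2 ⟨hsum.le, fun m hm => (hmem m hm).1⟩
  refine ⟨σ, fun τ f hQ => R_of_cycleType σ (by rw [hσ, hsum]) ?_ ?_ _ τ f le_rfl hQ⟩
  · rw [hσ, hM]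
    refine Multiset.Nodup.map ?_ (Finset.univ.nodup)
    intro i j hij
    apply hb.injective
    have := hpos i
    have := hpos j
    have hij : 4 * b i - 1 = 4 * b j - 1 := hij
    omega
  · intro m hm
    rw [hσ] at hm
    exact (hmem m hm).2

end CyclePart

section FinalPart
open Equiv Equiv.Perm

/-- `{0,…,2k-1}` as `k` pairs -/
def pairEquiv (k : ℕ) : Fin (2 * k) ≃ Fin k × Bool where
  toFun i := (⟨(i : ℕ) / 2, by have := i.isLt; omega⟩, decide ((i : ℕ) % 2 = 1))
  invFun x := ⟨2 * (x.1 : ℕ) + (if x.2 then 1 else 0), by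
    have := x.1.isLt; split_ifs <;> omega⟩
  left_inv i := by
    ext
    simp only [decide_eq_true_eq]
    split_ifs <;> omega
  right_inv x := by
    obtain ⟨i, b⟩ := x
    cases b
    · simp
    · ext
      · simp; omega
      · simp

theorem induced_iff {k : ℕ} (g : Perm (Fin (2 * k))) (σ : Perm (Fin k)) :
    InducedPairPerm g σ ↔ Ind ((pairEquiv k).permCongr g) σ := by
  constructor
  · intro h x
    have := h ((pairEquiv k).symm x)
    rw [Equiv.permCongr_apply]
    ext
    have h2 : (⟨((pairEquiv k).symm x : ℕ) / 2, by
        have := ((pairEquiv k).symm x).isLt; omega⟩ : Fin k) = x.1 :=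
      congrArg Prod.fst ((pairEquiv k).apply_symm_apply x)
    rw [h2] at this
    exact this
  · intro h i
    have := h (pairEquiv k i)
    rw [Equiv.permCongr_apply, Equiv.symm_apply_apply] at this
    exact congrArg Fin.val this

theorem stmt13 (k : ℕ) (hk : 2 ≤ k)
    -- `H = Δ_k`: the permutations `g` mapping pairs to pairs such that
    -- `sgn g = sgn ḡ`, where `ḡ` is the induced permutation of the `k` pairs
    (H : Subgroup (Equiv.Perm (Fin (2 * k))))
    (hH : ∀ g : Equiv.Perm (Fin (2 * k)), g ∈ H ↔
      ∃ σ : Equiv.Perm (Fin k), InducedPairPerm g σ ∧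
        Equiv.Perm.sign g = Equiv.Perm.sign σ) :
    IsMultFree H ↔
      ¬ ∃ (s : ℕ) (b : Fin s → ℕ), 0 < s ∧ StrictAnti b ∧ (∀ i, 0 < b i) ∧
        k + s = 4 * (∑ i, b i) := by
  let Φ : Equiv.Perm (Fin (2 * k)) ≃* Equiv.Perm (Fin k × Bool) := (pairEquiv k).permCongrHom
  have hΦ : ∀ g, Φ g = (pairEquiv k).permCongr g := fun g => rfl
  have hmem : ∀ g, g ∈ H ↔ XX (Φ g) 1 := by
    intro g
    rw [hH, XX]
    refine exists_congr (fun σ => ?_)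
    rw [induced_iff, hΦ, sign_permCongr]
    refine and_congr_right (fun _ => ?_)
    constructor
    · intro h; rw [h, Int.units_mul_self]
    · intro h
      rw [← mul_one (Equiv.Perm.sign g), ← Int.units_mul_self (Equiv.Perm.sign σ), ← mul_assoc, h,
        one_mul]
  constructor
  · rintro hmf ⟨s, b, -, hb, hpos, hks⟩
    obtain ⟨σ, hσ⟩ := exists_R (I := Fin k) s b hb hpos (by simpa using hks)
    have hnP : ¬ PP (GG σ) := by
      rw [PP_GG_iff]
      rintro ⟨τ, f, hQ, hs⟩
      rw [hσ τ f hQ] at hs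
      exact absurd hs (by decide)
    apply hnP
    let i0 : Fin k := ⟨0, by omega⟩
    have hc : XX (EE (1 : Equiv.Perm (Fin k)) (fun i => decide (i = i0))) (-1) := by
      have h1 := EE_XX (1 : Equiv.Perm (Fin k)) (fun i => decide (i = i0))
      have h2 : FS (fun i : Fin k => decide (i = i0)) = -1 := by
        rw [FS, Finset.prod_eq_single i0]
        · simp
        · intro j _ hj; simp [hj]
        · simp
      rwa [h2, Perm.sign_one, one_mul] at h1
    set c' := EE (1 : Equiv.Perm (Fin k)) (fun i => decide (i = i0)) with hc'
    have hΦc : Φ (Φ.symm c') = c' := Φ.apply_symm_apply _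
    obtain ⟨δ, hδ, δ', hδ', heq⟩ := comm_of_multFree H hmf (Φ.symm c') (by
      intro δ
      rw [hmem, hmem, map_mul, map_mul, map_inv, hΦc]
      constructor
      · intro h
        simpa using (hc.mul h).mul hc.inv
      · intro h
        have := (hc.inv.mul h).mul hc
        rw [show c'⁻¹ * (c' * Φ δ * c'⁻¹) * c' = Φ δ by group] at this
        simpa using this) (Φ.symm (GG σ))
    have heq2 := congrArg Φ heq
    simp only [map_mul, MulEquiv.apply_symm_apply] at heq2
    rw [hmem] at hδ hδ'
    refine ⟨(Φ δ)⁻¹ * c', c' * Φ δ', _, ?_, by simpa using hδ.inv.mul hc, hc.mul hδ'⟩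
    rw [mul_assoc, heq2]; group
  · intro hno
    have hPG : ∀ σ : Equiv.Perm (Fin k), PP (GG σ) := by
      intro σ
      by_contra hP
      apply hno
      have := exists_seq σ (by simp; omega) (fun τ f hQ => by
        rcases Int.units_eq_one_or (sign τ * FS f) with h | h
        · exact h
        · exact absurd ((PP_GG_iff σ).2 ⟨τ, f, hQ, h⟩) hP)
      simpa using this
    have hPP : ∀ g : Equiv.Perm (Fin k × Bool), PP g := by
      intro g
      obtain ⟨h1, h2, e1, e2, σ, H1, H2, rfl⟩ := normal_form g
      exact (hPG σ).conj H1 H2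
    apply multFree_of_symm
    intro g
    obtain ⟨A, B, e, hA, hB, hAB⟩ := exists_swapPerm (Φ g)
    obtain ⟨δ, δ', h1, h2, h3⟩ := symm_of_PP (hPP (Φ g)) hAB hA hB
    refine ⟨Φ.symm δ, by rw [hmem, Φ.apply_symm_apply]; exact h1,
      Φ.symm δ', by rw [hmem, Φ.apply_symm_apply]; exact h2, ?_⟩
    apply Φ.injective
    simp only [map_mul, map_inv, MulEquiv.apply_symm_apply]
    exact h3

end FinalPart
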